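/- arXiv:1903.04773 — 3 statements merged into one kernel-verified Lean document; each statement's English description precedes it below -/
import Mathlib

section
/- Let n ≥ 2 and 1 ≤ s ≤ n/2 be integers and K a field. If δ : M_n(K) → M_n(K) satisfies δ(xy) = δ(x)y + xδ(y) for all x, y of rank exactly s, then δ(xy) = δ(x)y + xδ(y) holds for all x of rank exactly 1 and all y of rank exactly s. -/
open Matrix

/-!
The defect `D (x * y) - D x * y - x * D y` of the Leibniz rule is a Hochschild 2-cocycle. Hence, if
the rule holds at `(a, b)` and at `(b, c)`, then it holds at `(a * b, c)` if and only if it holds at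
`(a, b * c)`. Suppose that it holds at all pairs of rank `s`, where `2 * s ≤ dim V`.

* If `a` has rank `s`, `z` has rank at most `s` and `range z` meets `ker a` trivially, let `c` be
  the projection along `ker a` onto a complement containing `range z`. Adding to `z` a map into
  `ker a` produces `d` of rank `s` with `c * d = z`. Since `a * c = a`, the rule moves from
  `(a * c, d)` to `(a, z)`.
* If `x` has rank at most `s` and `y` has rank `s`, choose `W` of codimension `s` with
  `ker x ⊓ range y ≤ W ≤ ker x` and write `x = a * b` with `a`, `b` of rank `s` and `ker b = W`.
  Then `range (b * y)` meets `ker a` trivially, so the rule moves from `(a, b * y)` to `(x, y)`.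
* If `x` and `y` have rank at most `s`, write `y = c * d` with `c`, `d` of rank `s`; the rule moves
  from `(x * c, d)` to `(x, y)`.
-/

open Module LinearMap

section Modules

variable {R M M' : Type*} [Ring R] [AddCommGroup M] [Module R M] [AddCommGroup M'] [Module R M']

theorem range_add_of_codisjoint_ker {f g : M →ₗ[R] M'} (h : Codisjoint (ker f) (ker g)) :
    range (f + g) = range f ⊔ range g := by
  refine le_antisymm ?_ (sup_le ?_ ?_)
  · rintro _ ⟨v, rfl⟩
    exact Submodule.add_mem_sup (mem_range_self f v) (mem_range_self g v)
  all_goals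
    rintro _ ⟨v, rfl⟩
    obtain ⟨p, hp, q, hq, rfl⟩ := Submodule.mem_sup.mp (h.eq_top ▸ Submodule.mem_top (x := v))
    rw [mem_ker] at hp hq
  · exact ⟨q, by simp [hp, hq]⟩
  · exact ⟨p, by simp [hp, hq]⟩

theorem comp_projection_eq_self {f : M →ₗ[R] M'} {C W : Submodule R M} (hCW : IsCompl C W)
    (hW : W ≤ ker f) : f ∘ₗ C.projection W hCW = f := by
  ext v
  have hv := hW (Submodule.sub_projection_mem hCW v)
  rw [mem_ker, map_sub, sub_eq_zero] at hv
  exact hv.symm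

end Modules

section Factorization

variable {K V V' : Type*} [DivisionRing K] [AddCommGroup V] [Module K V] [FiniteDimensional K V]
  [AddCommGroup V'] [Module K V']

theorem exists_submodule_between_finrank_eq {P Q : Submodule K V} (hPQ : P ≤ Q) {k : ℕ}
    (hPk : finrank K P ≤ k) (hkQ : k ≤ finrank K Q) :
    ∃ W : Submodule K V, P ≤ W ∧ W ≤ Q ∧ finrank K W = k := by
  induction k, hPk using Nat.le_induction with
  | base => exact ⟨P, le_rfl, hPQ, rfl⟩
  | succ k _ ih =>
    obtain ⟨W, hPW, hWQ, hW⟩ := ih (by lia)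
    obtain ⟨v, hvQ, hvW⟩ := SetLike.exists_of_lt (hWQ.lt_of_ne (by rintro rfl; lia))
    refine ⟨W ⊔ K ∙ v, hPW.trans le_sup_left, sup_le hWQ ?_, ?_⟩
    · rwa [Submodule.span_singleton_le_iff_mem]
    · rw [Submodule.finrank_sup_span_singleton hvW, hW]

theorem exists_linearMap_le_ker_range_le_finrank_range_eq [FiniteDimensional K V']
    (P : Submodule K V) (Q : Submodule K V') {k : ℕ} (hP : finrank K P + k ≤ finrank K V)
    (hQ : k ≤ finrank K Q) :
    ∃ f : V →ₗ[K] V', P ≤ ker f ∧ range f ≤ Q ∧ finrank K (range f) = k := by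
  obtain ⟨N, hPN, -, hN⟩ := exists_submodule_between_finrank_eq (le_top : P ≤ ⊤)
    (k := finrank K V - k) (by lia) (by rw [finrank_top]; lia)
  obtain ⟨S, -, hSQ, hS⟩ := exists_submodule_between_finrank_eq (bot_le : ⊥ ≤ Q) (by simp) hQ
  have hquot := N.finrank_quotient_add_finrank
  let e : (V ⧸ N) ≃ₗ[K] S := LinearEquiv.ofFinrankEq _ _ (by lia)
  have hker : ker (S.subtype ∘ₗ e.toLinearMap ∘ₗ N.mkQ) = N := by
    rw [ker_comp_of_ker_eq_bot _ S.ker_subtype, ker_comp_of_ker_eq_bot _ e.ker, N.ker_mkQ]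
  have hrange : range (S.subtype ∘ₗ e.toLinearMap ∘ₗ N.mkQ) = S := by
    simp only [range_comp, N.range_mkQ, Submodule.map_top, e.range, S.range_subtype]
  exact ⟨_, hPN.trans hker.ge, hrange.trans_le hSQ, by rw [hrange, hS]⟩

theorem exists_linearMap_finrank_range_add_eq [FiniteDimensional K V'] (f : V →ₗ[K] V')
    {P : Submodule K V} {Q : Submodule K V'} (hP : Codisjoint (ker f) P)
    (hQ : Disjoint (range f) Q) {k : ℕ} (hPk : finrank K P + k ≤ finrank K V)
    (hQk : k ≤ finrank K Q) :
    ∃ g : V →ₗ[K] V', P ≤ ker g ∧ range g ≤ Q ∧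
      finrank K (range (f + g)) = finrank K (range f) + k := by
  obtain ⟨g, hPg, hgQ, hg⟩ := exists_linearMap_le_ker_range_le_finrank_range_eq P Q hPk hQk
  refine ⟨g, hPg, hgQ, ?_⟩
  rw [range_add_of_codisjoint_ker (hP.mono_right hPg), ← hg,
    ← Submodule.finrank_sup_add_finrank_inf_eq, (hQ.mono_right hgQ).eq_bot, finrank_bot, add_zero]

theorem exists_mul_eq_and_ker_eq {s : ℕ} (hs : 2 * s ≤ finrank K V) {x : End K V}
    {W : Submodule K V} (hWx : W ≤ ker x) (hW : finrank K W + s = finrank K V) :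
    ∃ a b : End K V, a * b = x ∧ finrank K (range a) = s ∧ finrank K (range b) = s ∧
      ker b = W := by
  obtain ⟨C, hCW⟩ := exists_isCompl W
  obtain ⟨R, hR⟩ := exists_isCompl (range x)
  have hCdim := Submodule.finrank_add_eq_of_isCompl hCW
  have hRdim := Submodule.finrank_add_eq_of_isCompl hR
  have hxdim := finrank_range_add_finrank_ker x
  have hWxdim := Submodule.finrank_mono hWx
  obtain ⟨g, hCg, -, hxg⟩ := exists_linearMap_finrank_range_add_eq x
    (hCW.codisjoint.mono_left hWx) hR.disjoint (k := s - finrank K (range x)) (by lia) (by lia)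
  have hgC : g ∘ₗ C.projection W hCW.symm = 0 := by
    rw [← range_le_ker_iff, Submodule.range_projection]
    exact hCg
  refine ⟨x + g, C.projection W hCW.symm, ?_, by lia, ?_, Submodule.ker_projection _⟩
  · rw [End.mul_eq_comp, add_comp, comp_projection_eq_self _ hWx, hgC, add_zero]
  · rw [Submodule.range_projection]
    lia

theorem exists_mul_eq_and_mul_eq_self_of_disjoint {a z : End K V}
    (ha : 2 * finrank K (range a) ≤ finrank K V) (hz : finrank K (range z) ≤ finrank K (range a))
    (hza : Disjoint (range z) (ker a)) :
    ∃ c d : End K V, c * d = z ∧ a * c = a ∧ finrank K (range c) = finrank K (range a) ∧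
      finrank K (range d) = finrank K (range a) := by
  obtain ⟨C, hzC, hC⟩ := hza.exists_isCompl
  obtain ⟨P, hP⟩ := exists_isCompl (ker z)
  have hCdim := Submodule.finrank_add_eq_of_isCompl hC
  have hPdim := Submodule.finrank_add_eq_of_isCompl hP
  have hadim := finrank_range_add_finrank_ker a
  have hzdim := finrank_range_add_finrank_ker z
  obtain ⟨g, -, hga, hzg⟩ := exists_linearMap_finrank_range_add_eq z hP.codisjoint hza
    (k := finrank K (range a) - finrank K (range z)) (by lia) (by lia)
  have hCz : C.projection (ker a) hC ∘ₗ z = z := by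
    ext v
    exact Submodule.projection_apply_of_mem_left hC (hzC (mem_range_self z v))
  have hCg : C.projection (ker a) hC ∘ₗ g = 0 := by
    rw [← range_le_ker_iff, Submodule.ker_projection]
    exact hga
  refine ⟨C.projection (ker a) hC, z + g, ?_, comp_projection_eq_self hC le_rfl, ?_, by lia⟩
  · rw [End.mul_eq_comp, comp_add, hCz, hCg, add_zero]
  · rw [Submodule.range_projection]
    lia

end Factorization

section Leibniz

/-- `D` satisfies the Leibniz rule at the pair `(x, y)`, where elements of `A` act on values of `D`
by multiplication through `φ`. Allowing `R ≠ A` lets endomorphisms act on matrices. -/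
def IsLeibnizAt {A R : Type*} [Semigroup A] [NonUnitalSemiring R] (φ : A →ₙ* R) (D : A → R)
    (x y : A) : Prop :=
  D (x * y) = D x * φ y + φ x * D y

theorem IsLeibnizAt.mul_left_iff_mul_right {A R : Type*} [Semigroup A] [NonUnitalSemiring R]
    {φ : A →ₙ* R} {D : A → R} {a b c : A} (hab : IsLeibnizAt φ D a b)
    (hbc : IsLeibnizAt φ D b c) : IsLeibnizAt φ D (a * b) c ↔ IsLeibnizAt φ D a (b * c) := by
  have hrhs : D (a * b) * φ c + φ (a * b) * D c = D a * φ (b * c) + φ a * D (b * c) := by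
    rw [hab, hbc, map_mul, map_mul, add_mul, mul_add, mul_assoc, mul_assoc, mul_assoc, add_assoc]
  rw [IsLeibnizAt, IsLeibnizAt, mul_assoc, hrhs]

variable {K V R : Type*} [DivisionRing K] [AddCommGroup V] [Module K V] [FiniteDimensional K V]
  [NonUnitalSemiring R] {φ : End K V →ₙ* R} {D : End K V → R} {s : ℕ}

theorem isLeibnizAt_of_disjoint_range_ker (hs : 2 * s ≤ finrank K V)
    (hD : ∀ x y : End K V, finrank K (range x) = s → finrank K (range y) = s →
      IsLeibnizAt φ D x y)
    {a z : End K V} (ha : finrank K (range a) = s) (hz : finrank K (range z) ≤ s)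
    (hza : Disjoint (range z) (ker a)) : IsLeibnizAt φ D a z := by
  subst ha
  obtain ⟨c, d, rfl, hac, hc, hd⟩ := exists_mul_eq_and_mul_eq_self_of_disjoint hs hz hza
  rw [← (hD a c rfl hc).mul_left_iff_mul_right (hD c d hc hd), hac]
  exact hD a d rfl hd

theorem isLeibnizAt_of_finrank_range_le_of_eq (hs : 2 * s ≤ finrank K V)
    (hD : ∀ x y : End K V, finrank K (range x) = s → finrank K (range y) = s →
      IsLeibnizAt φ D x y)
    {x y : End K V} (hx : finrank K (range x) ≤ s) (hy : finrank K (range y) = s) :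
    IsLeibnizAt φ D x y := by
  have hxdim := finrank_range_add_finrank_ker x
  have hinf : finrank K ↥(ker x ⊓ range y) ≤ s := hy ▸ Submodule.finrank_mono inf_le_right
  obtain ⟨W, hW, hWx, hWdim⟩ := exists_submodule_between_finrank_eq
    (inf_le_left : ker x ⊓ range y ≤ ker x) (k := finrank K V - s) (by lia) (by lia)
  obtain ⟨a, b, rfl, ha, hb, rfl⟩ := exists_mul_eq_and_ker_eq hs hWx (by lia)
  have hdisj : Disjoint (range (b * y)) (ker a) := by
    rw [Submodule.disjoint_def]
    rintro _ ⟨v, rfl⟩ hv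
    exact hW ⟨hv, mem_range_self y v⟩
  have hby : finrank K (range (b * y)) ≤ s :=
    hb ▸ Submodule.finrank_mono (range_comp_le_range y b)
  rw [(hD a b ha hb).mul_left_iff_mul_right (hD b y hb hy)]
  exact isLeibnizAt_of_disjoint_range_ker hs hD ha hby hdisj

theorem stmt_4_general (hs : 2 * s ≤ finrank K V)
    (hD : ∀ x y : End K V, finrank K (range x) = s → finrank K (range y) = s →
      D (x * y) = D x * φ y + φ x * D y)
    {x y : End K V} (hx : finrank K (range x) ≤ s) (hy : finrank K (range y) ≤ s) :
    D (x * y) = D x * φ y + φ x * D y := by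
  have hydim := finrank_range_add_finrank_ker y
  obtain ⟨W, -, hWy, hW⟩ := exists_submodule_between_finrank_eq (bot_le : ⊥ ≤ ker y)
    (k := finrank K V - s) (by simp) (by lia)
  obtain ⟨c, d, rfl, hc, hd, -⟩ := exists_mul_eq_and_ker_eq hs hWy (by lia)
  have hxc : finrank K (range (x * c)) ≤ s :=
    (Submodule.finrank_mono (range_comp_le_range c x)).trans hx
  have hLeibniz_xc : IsLeibnizAt φ D x c := isLeibnizAt_of_finrank_range_le_of_eq hs hD hx hc
  exact (hLeibniz_xc.mul_left_iff_mul_right (hD c d hc hd)).mp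
    (isLeibnizAt_of_finrank_range_le_of_eq hs hD hxc hd)

end Leibniz

theorem rank_toMatrixAlgEquiv' {R n : Type*} [CommRing R] [Fintype n] [DecidableEq n]
    (f : End R (n → R)) : (toMatrixAlgEquiv' f).rank = finrank R (range f) := by
  rw [Matrix.rank, ← toLin'_apply']
  exact congrArg (fun g : End R (n → R) => finrank R (range g)) (toLinAlgEquiv'_toMatrixAlgEquiv' f)

theorem stmt_4 {n s : ℕ} (K : Type*) [Field K]
    (hn : 2 ≤ n) (hs1 : 1 ≤ s) (hs2 : 2 * s ≤ n)
    (δ : Matrix (Fin n) (Fin n) K → Matrix (Fin n) (Fin n) K)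
    (hδ : ∀ x y : Matrix (Fin n) (Fin n) K,
      x.rank = s → y.rank = s → δ (x * y) = δ x * y + x * δ y) :
    ∀ x y : Matrix (Fin n) (Fin n) K,
      x.rank = 1 → y.rank = s → δ (x * y) = δ x * y + x * δ y := by
  intro x y hx hy
  have hδ_end (f g : End K (Fin n → K)) (hf : finrank K (range f) = s)
      (hg : finrank K (range g) = s) := hδ (toMatrixAlgEquiv' f) (toMatrixAlgEquiv' g)
    ((rank_toMatrixAlgEquiv' f).trans hf) ((rank_toMatrixAlgEquiv' g).trans hg)
  simpa using stmt_4_general (φ := toMatrixAlgEquiv'.toMulEquiv.toMulHom)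
    (D := δ ∘ toMatrixAlgEquiv') (x := toLinAlgEquiv' x) (y := toLinAlgEquiv' y)
    (by simpa using hs2) (by simpa using hδ_end) (hx.trans_le hs1) hy.le
end

section
/- Let n ≥ 2 and 1 ≤ s ≤ n/2 be integers and let K be a field. If a map δ : M_n(K) → M_n(K) satisfies δ(xy) = δ(x)y + xδ(y) for all matrices x, y ∈ M_n(K) of rank exactly s, then there exists a derivation D of M_n(K) such that δ(x) = D(x) for every x ∈ M_n(K) with rank(x) ≤ s. -/
open Matrix

/-!
Fix a vector `w` and a functional `ψ` with `ψ w = 1`, and put `T u = δ (ψ ⊗ u) w`, where `ψ ⊗ u`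
is the rank-one map `v ↦ ψ v • u`. If the Leibniz rule holds for `x` and `ψ ⊗ u`, evaluating it
at `w` gives `δ x = T ∘ x - x ∘ T`. Since `2 s ≤ dim V`, every `z` of rank at most `s` is a product
`b * c` of maps of rank `s`, and the range of `b` may be any `s`-dimensional space containing the
range of `z`; this freedom extends the Leibniz rule from rank `s` to the cases that are needed.

The map `T` is not assumed additive, but its additivity defect `T (u + v) - T u - T v` and its
homogeneity defects `T (r • u) - r • T u` commute with all rank-one maps. This forces the former
to vanish and the latter to be scalars, so `x ↦ T ∘ x - x ∘ T` is a derivation of `End K V`.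
-/

namespace RankDerivation

open Module Submodule

variable {K V : Type*} [DivisionRing K] [AddCommGroup V] [Module K V]

lemma exists_apply_eq_one_and_le_ker {p : Submodule K V} {v : V} (hv : v ∉ p) :
    ∃ φ : V →ₗ[K] K, φ v = 1 ∧ p ≤ LinearMap.ker φ := by
  obtain ⟨φ, hφp, hφv⟩ := LinearMap.exists_extend_of_notMem (0 : p →ₗ[K] K) hv 1
  exact ⟨φ, hφv, fun x hx => LinearMap.congr_fun hφp ⟨x, hx⟩⟩

lemma rank_smulRight_le_one (φ : V →ₗ[K] K) (a : V) : (φ.smulRight a).rank ≤ 1 := by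
  refine (rank_submodule_le_one_iff' _).2 ⟨a, ?_⟩
  rintro _ ⟨v, rfl⟩
  exact smul_mem _ _ (mem_span_singleton_self a)

lemma rank_span_singleton_le_one (v : V) : Module.rank K (K ∙ v) ≤ 1 :=
  (rank_submodule_le_one_iff' _).2 ⟨v, le_rfl⟩

lemma rank_sup_span_singleton {p : Submodule K V} {v : V} (hv : v ∉ p) :
    Module.rank K (p ⊔ K ∙ v : Submodule K V) = Module.rank K p + 1 := by
  have hv0 : v ≠ 0 := fun h => hv (h ▸ p.zero_mem)
  have hinf : p ⊓ K ∙ v = ⊥ := ((disjoint_span_singleton' hv0).2 hv).eq_bot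
  have hspan : Module.rank K (K ∙ v) = 1 :=
    (rank_submodule_eq_one_iff _).2 ⟨v, mem_span_singleton_self v, hv0, le_rfl⟩
  rw [← hspan, ← rank_sup_add_rank_inf_eq, hinf, rank_bot, add_zero]

lemma exists_between_rank_eq {s : ℕ} {A B : Submodule K V} (hAB : A ≤ B)
    (hA : Module.rank K A ≤ s) (hB : s ≤ Module.rank K B) :
    ∃ W : Submodule K V, A ≤ W ∧ W ≤ B ∧ Module.rank K W = s := by
  induction s with
  | zero => exact ⟨A, le_rfl, hAB, by simpa using hA⟩
  | succ k ih =>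
    obtain hA | hA := hA.eq_or_lt
    · exact ⟨A, le_rfl, hAB, hA⟩
    have hk : (k : Cardinal) < Module.rank K B := (Nat.cast_lt.2 k.lt_succ_self).trans_le hB
    obtain ⟨W, hAW, hWB, hW⟩ := ih (by simpa [Order.lt_add_one_iff] using hA) hk.le
    obtain ⟨v, hvB, hvW⟩ := SetLike.exists_of_lt (hWB.lt_of_ne fun h => hk.ne (by rw [← hW, h]))
    refine ⟨W ⊔ K ∙ v, hAW.trans le_sup_left, sup_le hWB (by simpa using hvB), ?_⟩
    rw [rank_sup_span_singleton hvW, hW, Nat.cast_succ]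

lemma exists_le_rank_eq {s : ℕ} (hs : s ≤ Module.rank K V) {A : Submodule K V}
    (hA : Module.rank K A ≤ s) : ∃ W : Submodule K V, A ≤ W ∧ Module.rank K W = s := by
  obtain ⟨W, hAW, -, hW⟩ := exists_between_rank_eq (le_top : A ≤ ⊤) hA (by rwa [rank_top])
  exact ⟨W, hAW, hW⟩

lemma natCast_le_rank_of_isCompl {s : ℕ} (hs : 2 * s ≤ Module.rank K V) {A B : Submodule K V}
    (hAB : IsCompl A B) (hA : Module.rank K A = s) : s ≤ Module.rank K B := by
  have hsum := A.rank_quotient_add_rank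
  rw [(quotientEquivOfIsCompl A B hAB).rank_eq, hA] at hsum
  rwa [← hsum, two_mul, Cardinal.add_le_add_iff_of_lt_aleph0 Cardinal.natCast_lt_aleph0] at hs

lemma exists_isCompl_rank_eq_and_le_ker {s : ℕ} (hs : s ≤ Module.rank K V) {z : End K V}
    (hz : z.rank ≤ s) :
    ∃ R C : Submodule K V, IsCompl R C ∧ Module.rank K R = s ∧ C ≤ LinearMap.ker z := by
  obtain ⟨Z, hZ⟩ := (LinearMap.ker z).exists_isCompl
  obtain ⟨R, hZR, hR⟩ :=
    exists_le_rank_eq hs ((z.kerComplementEquivRange hZ.symm).rank_eq.trans_le hz)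
  obtain ⟨C, hCz, hC⟩ := (hZ.codisjoint.mono_right hZR).exists_isCompl
  exact ⟨R, C, hC.symm, hR, hCz⟩

lemma exists_mem_rank_eq_and_le_ker_or_map_eq_range {s : ℕ} (hs1 : 1 ≤ s)
    (hs2 : 2 * s ≤ Module.rank K V) {x : End K V} (hx : x.rank = s) (u : V) :
    ∃ W : Submodule K V, u ∈ W ∧ Module.rank K W = s ∧
      (W ≤ LinearMap.ker x ∨ W.map x = LinearMap.range x) := by
  have rank_compl {Z : Submodule K V} (hZ : IsCompl Z (LinearMap.ker x)) : Module.rank K Z = s :=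
    (x.kerComplementEquivRange hZ).rank_eq.trans hx
  by_cases hu : u ∈ LinearMap.ker x
  · obtain ⟨Z, hZ⟩ := (LinearMap.ker x).exists_isCompl
    obtain ⟨W, huW, hWx, hW⟩ := exists_between_rank_eq ((span_singleton_le_iff_mem _ _).2 hu)
      ((rank_span_singleton_le_one u).trans (Nat.one_le_cast.2 hs1))
      (natCast_le_rank_of_isCompl hs2 hZ.symm (rank_compl hZ.symm))
    exact ⟨W, huW (mem_span_singleton_self u), hW, .inl hWx⟩
  · have hu0 : u ≠ 0 := fun h => hu (h ▸ zero_mem _)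
    obtain ⟨W, huW, hWx⟩ := ((disjoint_span_singleton' hu0).2 hu).symm.exists_isCompl
    refine ⟨W, huW (mem_span_singleton_self u), rank_compl hWx, .inr ?_⟩
    rw [LinearMap.range_eq_map, ← hWx.sup_eq_top, Submodule.map_sup,
      (LinearMap.le_ker_iff_map (f := x)).1 le_rfl, sup_bot_eq]

lemma exists_mul_projection_eq {R C W : Submodule K V} (hRC : IsCompl R C)
    (hWC : Module.rank K W ≤ Module.rank K C) {z : End K V} (hzW : LinearMap.range z ≤ W)
    (hCz : C ≤ LinearMap.ker z) :
    ∃ b : End K V, b * R.projection C hRC = z ∧ LinearMap.range b = W := by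
  obtain ⟨f, hf⟩ := rank_le_iff_exists_linearMap.1 hWC
  obtain ⟨g, hgf⟩ := f.exists_leftInverse_of_injective (LinearMap.ker_eq_bot.2 hf)
  have hg : LinearMap.range g = ⊤ :=
    LinearMap.range_eq_top.2 fun w => ⟨f w, LinearMap.congr_fun hgf w⟩
  refine ⟨LinearMap.ofIsCompl hRC (z ∘ₗ R.subtype) (W.subtype ∘ₗ g), ?_, ?_⟩
  · ext v
    have hv : z (v - R.projection C hRC v) = 0 := hCz (sub_projection_mem hRC v)
    rw [map_sub, sub_eq_zero] at hv
    exact (LinearMap.ofIsCompl_apply_left hRC (R.projectionOnto C hRC v)).trans hv.symm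
  · rw [LinearMap.range_ofIsCompl, LinearMap.range_comp_of_range_eq_top _ hg, range_subtype]
    exact sup_eq_right.2 ((LinearMap.range_comp_le_range _ _).trans hzW)

lemma exists_mul_eq_of_range_le {s : ℕ} (hs : 2 * s ≤ Module.rank K V) {z : End K V}
    {W : Submodule K V} (hW : Module.rank K W = s) (hzW : LinearMap.range z ≤ W) :
    ∃ b c : End K V, b * c = z ∧ LinearMap.range b = W ∧ c.rank = s := by
  have hsV : s ≤ Module.rank K V := hW ▸ W.rank_le
  obtain ⟨R, C, hRC, hR, hCz⟩ :=
    exists_isCompl_rank_eq_and_le_ker hsV ((rank_mono hzW).trans_eq hW)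
  obtain ⟨b, hbz, hb⟩ := exists_mul_projection_eq hRC
    (hW.trans_le (natCast_le_rank_of_isCompl hs hRC hR)) hzW hCz
  exact ⟨b, R.projection C hRC, hbz, hb, by rw [LinearMap.rank, range_projection, hR]⟩

lemma exists_mul_eq_of_rank_le {s : ℕ} (hs : 2 * s ≤ Module.rank K V) {z : End K V}
    (hz : z.rank ≤ s) :
    ∃ b c : End K V, b * c = z ∧ b.rank = s ∧ c.rank = s := by
  have hsV : s ≤ Module.rank K V := le_trans (by norm_cast; lia) hs
  obtain ⟨W, hzW, hW⟩ := exists_le_rank_eq hsV hz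
  obtain ⟨b, c, hbc, hb, hc⟩ := exists_mul_eq_of_range_le hs hW hzW
  exact ⟨b, c, hbc, by rw [LinearMap.rank, hb, hW], hc⟩

lemma exists_eq_smul_of_forall_rank_le_one {S : V → V}
    (hS : ∀ x : End K V, x.rank ≤ 1 → ∀ u, S (x u) = x (S u)) :
    ∃ d : K, ∀ u, S u = d • u := by
  obtain _ | _ := subsingleton_or_nontrivial V
  · exact ⟨0, fun u => Subsingleton.elim _ _⟩
  obtain ⟨w, hw⟩ := exists_ne (0 : V)
  obtain ⟨φ, hφw, -⟩ := exists_apply_eq_one_and_le_ker (p := (⊥ : Submodule K V)) hw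
  refine ⟨φ (S w), fun u => ?_⟩
  simpa [hφw] using hS (φ.smulRight u) (rank_smulRight_le_one φ u) w

section Biequivariant

variable {B : V → V → V}

lemma mem_span_singleton_of_forall_rank_le_one
    (hB : ∀ x : End K V, x.rank ≤ 1 → ∀ u v, B (x u) (x v) = x (B u v))
    (hB_left : ∀ v, B 0 v = 0) (u v : V) : B u v ∈ K ∙ u := by
  by_contra hmem
  obtain ⟨φ, hφ, hφu⟩ := exists_apply_eq_one_and_le_ker hmem
  have hu : φ u = 0 := hφu (mem_span_singleton_self u)
  have h := hB (φ.smulRight (B u v)) (rank_smulRight_le_one _ _) u v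
  simp only [LinearMap.smulRight_apply, hu, zero_smul, hB_left, hφ, one_smul] at h
  exact hmem (h ▸ zero_mem _)

lemma eq_zero_of_forall_rank_le_one (hV : 1 < Module.rank K V)
    (hB : ∀ x : End K V, x.rank ≤ 1 → ∀ u v, B (x u) (x v) = x (B u v))
    (hB_left : ∀ v, B 0 v = 0) (hB_right : ∀ u, B u 0 = 0) (u v : V) : B u v = 0 := by
  have eq_zero_of_notMem {u v : V} (huv : v ∉ K ∙ u) : B u v = 0 :=
    disjoint_def.1 (disjoint_span_singleton.2 fun h => absurd h huv) _
      (mem_span_singleton_of_forall_rank_le_one hB hB_left u v)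
      (mem_span_singleton_of_forall_rank_le_one (B := flip B) (fun x hx u v => hB x hx v u)
        hB_right v u)
  obtain rfl | hu := eq_or_ne u 0
  · exact hB_left v
  by_cases huv : v ∈ K ∙ u
  · -- `v` is the image of `v + b ∉ K ∙ u` under a rank-one map fixing `u`.
    obtain ⟨b, hub⟩ := exists_linearIndependent_pair_of_one_lt_rank hV hu
    have hbu : b ∉ K ∙ u := fun h => by
      obtain ⟨c, hc⟩ := mem_span_singleton.1 h
      exact (LinearIndependent.pair_iff' hu).1 hub c hc
    have hub : u ∉ K ∙ b := fun h => by
      obtain ⟨c, hc⟩ := mem_span_singleton.1 h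
      simpa using (LinearIndependent.pair_iff.1 hub 1 (-c) (by simp [hc])).1
    obtain ⟨φ, hφu, hbφ⟩ := exists_apply_eq_one_and_le_ker hub
    have hφb : φ b = 0 := hbφ (mem_span_singleton_self b)
    obtain ⟨t, rfl⟩ := mem_span_singleton.1 huv
    have h := hB (φ.smulRight u) (rank_smulRight_le_one φ u) u (t • u + b)
    rw [eq_zero_of_notMem fun hmem => hbu ((Submodule.add_mem_iff_right _ huv).1 hmem)] at h
    simpa [hφu, hφb] using h
  · exact eq_zero_of_notMem huv

end Biequivariant

/-- Jacobson's pseudo-linear transformations over the identity of `K`: additive maps with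
`T (r • v) = r • T v + d r • v`. Commutation with such a map is a derivation of `End K V`. The
derivation `d` of `K` is left existentially quantified, one scalar at a time. -/
structure IsPseudoLinear (K : Type*) {V : Type*} [DivisionRing K] [AddCommGroup V] [Module K V]
    (T : V → V) : Prop where
  protected map_add (u v : V) : T (u + v) = T u + T v
  exists_map_smul (r : K) : ∃ d : K, ∀ u, T (r • u) = r • T u + d • u

lemma isPseudoLinear_of_forall_rank_le_one (hV : 1 < Module.rank K V) {T : V → V}
    (hT : ∀ x : End K V, x.rank ≤ 1 → ∃ y : End K V, ∀ u, T (x u) = y u + x (T u)) :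
    IsPseudoLinear K T where
  map_add u v := by
    have hT0 : T 0 = 0 := by
      obtain ⟨y, hy⟩ := hT 0 (by simp)
      simpa using hy 0
    have h := eq_zero_of_forall_rank_le_one hV (B := fun u v => T (u + v) - (T u + T v))
      (fun x hx u v => by
        obtain ⟨y, hy⟩ := hT x hx
        rw [← map_add x, hy, hy, hy]
        simp only [map_add, map_sub]
        abel)
      (by simp [hT0]) (by simp [hT0]) u v
    exact sub_eq_zero.1 h
  exists_map_smul r := by
    obtain ⟨d, hd⟩ := exists_eq_smul_of_forall_rank_le_one (K := K)
      (S := fun u => T (r • u) - r • T u) fun x hx u => by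
        obtain ⟨y, hy⟩ := hT x hx
        rw [← map_smul x, hy, hy]
        simp only [map_smul, map_sub, smul_add]
        abel
    exact ⟨d, fun u => by rw [← hd, add_sub_cancel]⟩

namespace IsPseudoLinear

variable {T : V → V} (hT : IsPseudoLinear K T)

/-- The commutator `T ∘ x - x ∘ T` of a pseudo-linear map with an endomorphism, which is again
`K`-linear although `T` is not. -/
def commutator (x : End K V) : End K V where
  toFun u := T (x u) - x (T u)
  map_add' u v := by
    simp only [map_add, hT.map_add]
    abel
  map_smul' r u := by
    obtain ⟨d, hd⟩ := hT.exists_map_smul r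
    simp only [map_smul, hd, map_add, RingHom.id_apply, smul_sub]
    abel

lemma commutator_apply (x : End K V) (u : V) : hT.commutator x u = T (x u) - x (T u) := rfl

lemma commutator_add (x y : End K V) :
    hT.commutator (x + y) = hT.commutator x + hT.commutator y := by
  ext u
  simp only [commutator_apply, LinearMap.add_apply, hT.map_add]
  abel

lemma commutator_mul (x y : End K V) :
    hT.commutator (x * y) = hT.commutator x * y + x * hT.commutator y := by
  ext u
  simp only [commutator_apply, LinearMap.add_apply, End.mul_apply, map_sub]
  abel

end IsPseudoLinear

/-- The Leibniz rule for pairs of endomorphisms of rank exactly `s`, with no additivity of `δ`: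
the hypothesis from which a derivation is reconstructed. -/
def IsLeibnizOnRank (s : ℕ) (δ : End K V → End K V) : Prop :=
  ∀ x y : End K V, x.rank = s → y.rank = s → δ (x * y) = δ x * y + x * δ y

namespace IsLeibnizOnRank

variable {s : ℕ} {δ : End K V → End K V}

protected lemma map_zero (hδ : IsLeibnizOnRank s δ) (hs1 : 1 ≤ s) (hs2 : 2 * s ≤ Module.rank K V) :
    δ 0 = 0 := by
  have hsV : s ≤ Module.rank K V := le_trans (by norm_cast; lia) hs2
  ext q
  obtain ⟨W, hqW, hW⟩ :=
    exists_le_rank_eq hsV ((rank_span_singleton_le_one q).trans (Nat.one_le_cast.2 hs1))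
  obtain ⟨Q, hWQ⟩ := W.exists_isCompl
  obtain ⟨R, -, hRQ, hR⟩ := exists_between_rank_eq (bot_le : ⊥ ≤ Q) (s := s) (by simp)
    (natCast_le_rank_of_isCompl hs2 hWQ hW)
  have hWR : Disjoint W R := hWQ.disjoint.mono_right hRQ
  obtain ⟨C, hWC, hCR⟩ := hWR.exists_isCompl
  -- `δ 0 q` lies in both of the disjoint subspaces `W` and `R`.
  have mem_of_rank_eq {U : Submodule K V} (hU : Module.rank K U = s) : δ 0 q ∈ U := by
    obtain ⟨b, hb0, hbU⟩ := exists_mul_projection_eq hCR.symm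
      (hU.trans_le (natCast_le_rank_of_isCompl hs2 hCR.symm hR)) (z := 0) (W := U) (by simp)
      (by simp)
    have hqC : R.projection C hCR.symm q = 0 :=
      (projection_apply_eq_zero_iff _).2 (hWC (hqW (mem_span_singleton_self q)))
    rw [← hb0, hδ b _ (by rw [LinearMap.rank, hbU, hU])
      (by rw [LinearMap.rank, range_projection, hR])]
    simp [hqC, ← hbU]
  exact disjoint_def.1 hWR _ (mem_of_rank_eq hW) (mem_of_rank_eq hR)

lemma map_mul_smulRight (hδ : IsLeibnizOnRank s δ) (hs1 : 1 ≤ s)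
    (hs2 : 2 * s ≤ Module.rank K V) {x : End K V} (hx : x.rank = s) (φ : V →ₗ[K] K) (u : V) :
    δ (x * φ.smulRight u) = δ x * φ.smulRight u + x * δ (φ.smulRight u) := by
  obtain ⟨W, huW, hW, hWx⟩ := exists_mem_rank_eq_and_le_ker_or_map_eq_range hs1 hs2 hx u
  have hφW : LinearMap.range (φ.smulRight u) ≤ W := by
    rintro _ ⟨v, rfl⟩
    exact W.smul_mem _ huW
  -- With `range b = W`, the product `x * b` is either zero or again of rank `s`.
  obtain ⟨b, c, hbc, hbW, hc⟩ := exists_mul_eq_of_range_le hs2 hW hφW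
  have hb : b.rank = s := by rw [LinearMap.rank, hbW, hW]
  have leibniz_assoc : δ (x * b * c) = δ (x * b) * c + x * b * δ c := by
    obtain hWx | hWx := hWx
    · have hxb : x * b = 0 := LinearMap.range_le_ker_iff.1 (hbW.trans_le hWx)
      simp only [hxb, zero_mul, hδ.map_zero hs1 hs2, add_zero]
    · refine hδ _ c ?_ hc
      rw [LinearMap.rank, End.mul_eq_comp, LinearMap.range_comp, hbW, hWx, ← hx]
  rw [← hbc, ← mul_assoc, leibniz_assoc, hδ x b hx hb, hδ b c hb hc]
  noncomm_ring

lemma exists_isPseudoLinear (hδ : IsLeibnizOnRank s δ) (hs1 : 1 ≤ s)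
    (hs2 : 2 * s ≤ Module.rank K V) :
    ∃ (T : V → V) (hT : IsPseudoLinear K T), ∀ x : End K V, x.rank ≤ s → δ x = hT.commutator x := by
  have hV : 1 < Module.rank K V := lt_of_lt_of_le (by norm_cast; lia) hs2
  have : Nontrivial V := (rank_pos_iff_nontrivial (R := K)).1 (zero_lt_one.trans hV)
  obtain ⟨w, hw⟩ := exists_ne (0 : V)
  obtain ⟨ψ, hψw, -⟩ := exists_apply_eq_one_and_le_ker (p := (⊥ : Submodule K V)) hw
  let T : V → V := fun u => δ (ψ.smulRight u) w
  have apply_of_rank_eq {x : End K V} (hx : x.rank = s) (u : V) :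
      T (x u) = δ x u + x (T u) := by
    have h := LinearMap.congr_fun (hδ.map_mul_smulRight hs1 hs2 hx ψ u) w
    have hmul : x * ψ.smulRight u = ψ.smulRight (x u) := by
      ext v
      simp
    simpa [hmul, hψw] using h
  have apply_of_rank_le {x : End K V} (hx : x.rank ≤ s) (u : V) :
      T (x u) = δ x u + x (T u) := by
    obtain ⟨b, c, rfl, hb, hc⟩ := exists_mul_eq_of_rank_le hs2 hx
    rw [hδ b c hb hc, End.mul_apply, apply_of_rank_eq hb, apply_of_rank_eq hc]
    simp [add_assoc]
  have hT : IsPseudoLinear K T := isPseudoLinear_of_forall_rank_le_one hV fun x hx =>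
    ⟨δ x, apply_of_rank_le (hx.trans (Nat.one_le_cast.2 hs1))⟩
  refine ⟨T, hT, fun x hx => ?_⟩
  ext u
  rw [hT.commutator_apply, apply_of_rank_le hx, add_sub_cancel_right]

end IsLeibnizOnRank

lemma rank_toLinAlgEquiv' {K n : Type*} [Field K] [Fintype n] [DecidableEq n]
    (A : Matrix n n K) : (toLinAlgEquiv' A).rank = A.rank :=
  (finrank_eq_rank K _).symm

end RankDerivation

open RankDerivation

theorem stmt_13_general {K V : Type*} [DivisionRing K] [AddCommGroup V] [Module K V] {s : ℕ}
    (hs1 : 1 ≤ s) (hs2 : 2 * s ≤ Module.rank K V)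
    (δ : Module.End K V → Module.End K V)
    (hδ : ∀ x y : Module.End K V, x.rank = s → y.rank = s → δ (x * y) = δ x * y + x * δ y) :
    ∃ D : Module.End K V → Module.End K V,
      (∀ x y : Module.End K V, D (x + y) = D x + D y) ∧
      (∀ x y : Module.End K V, D (x * y) = D x * y + x * D y) ∧
      (∀ x : Module.End K V, x.rank ≤ s → δ x = D x) := by
  obtain ⟨T, hT, hδT⟩ := IsLeibnizOnRank.exists_isPseudoLinear hδ hs1 hs2
  exact ⟨hT.commutator, hT.commutator_add, hT.commutator_mul, hδT⟩

lemma exists_derivation_of_ringEquiv_end {K V R : Type*} [DivisionRing K] [AddCommGroup V]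
    [Module K V] [Semiring R] (e : R ≃+* Module.End K V) {rk : R → ℕ}
    (hrk : ∀ x, (e x).rank = rk x) {s : ℕ} (hs1 : 1 ≤ s) (hs2 : 2 * s ≤ Module.rank K V)
    {δ : R → R} (hδ : ∀ x y, rk x = s → rk y = s → δ (x * y) = δ x * y + x * δ y) :
    ∃ D : R → R, (∀ x y, D (x + y) = D x + D y) ∧ (∀ x y, D (x * y) = D x * y + x * D y) ∧
      ∀ x, rk x ≤ s → δ x = D x := by
  have rk_symm {f : Module.End K V} (hf : f.rank = s) : rk (e.symm f) = s := by
    rwa [← e.apply_symm_apply f, hrk, Nat.cast_inj] at hf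
  obtain ⟨D, hadd, hmul, hD⟩ := stmt_13_general hs1 hs2 (fun f => e (δ (e.symm f)))
    fun f g hf hg => by simp [hδ _ _ (rk_symm hf) (rk_symm hg)]
  refine ⟨fun x => e.symm (D (e x)), by simp [hadd], by simp [hmul], fun x hx => ?_⟩
  simp [← hD (e x) ((hrk x).trans_le (Nat.cast_le.2 hx))]

theorem stmt_13 {n s : ℕ} (K : Type*) [Field K]
    (hn : 2 ≤ n) (hs1 : 1 ≤ s) (hs2 : 2 * s ≤ n)
    (δ : Matrix (Fin n) (Fin n) K → Matrix (Fin n) (Fin n) K)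
    (hδ : ∀ x y : Matrix (Fin n) (Fin n) K,
      x.rank = s → y.rank = s → δ (x * y) = δ x * y + x * δ y) :
    ∃ D : Matrix (Fin n) (Fin n) K → Matrix (Fin n) (Fin n) K,
      (∀ x y : Matrix (Fin n) (Fin n) K, D (x + y) = D x + D y) ∧
      (∀ x y : Matrix (Fin n) (Fin n) K, D (x * y) = D x * y + x * D y) ∧
      (∀ x : Matrix (Fin n) (Fin n) K, x.rank ≤ s → δ x = D x) :=
  exists_derivation_of_ringEquiv_end toLinAlgEquiv'.toRingEquiv rank_toLinAlgEquiv' hs1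
    (by simpa using mod_cast hs2) hδ
end

section
/- Let n ≥ 2 and 1 ≤ s ≤ n/2 be integers and K a field. If δ : M_n(K) → M_n(K) satisfies δ(xy) = δ(x)y + xδ(y) for all rank-s matrices x, y, then there exist a matrix A ∈ M_n(K) and a derivation μ of the field K such that δ(x) = Ax − xA + μ̄(x) for all x of rank ≤ s, where μ̄ applies μ entrywise. -/
open Matrix

/-! The defect `c(x, y) = δ (x * y) - δ x * y - x * δ y` satisfies the Hochschild cocycle identity
`x * c(y, z) - c(x * y, z) + c(x, y * z) - c(x, y) * z = 0`, even though `δ` need not be additive.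
A factorization of `y` as `g * h` with factors of rank `s` therefore reduces the product rule at
`(x, y)` to pairs of rank `s`, provided `x * g` has rank `s` or is zero. As `2 * s ≤ n`, the
image of `g` can be any `s`-dimensional space `W` containing the image of `y`. If `x` has rank `s`
and `y` has rank at most one, `W` can be chosen inside `ker x` or disjoint from it.

Once the product rule holds for `x` of rank at most `s` and `y` of rank at most one, subtracting the
commutator with `∑ k, δ (E k o) * E o k` makes `δ` vanish on the matrix units `E i j`. Then
`E o i * x * E j o = x i j • E o o` forces `δ x` to be `x` with `μ c = δ (c • E o o) o o` applied
entrywise, and multiplying a row by a column shows that `μ` is a derivation. -/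

/-- `LeibnizAt δ x y` says that `δ` obeys the product rule for the product `x * y`. Neither
additivity of `δ` nor the rule for any other pair is assumed. -/
def LeibnizAt {R : Type*} [Mul R] [Add R] (δ : R → R) (x y : R) : Prop :=
  δ (x * y) = δ x * y + x * δ y

namespace LeibnizAt

section NonUnitalSemiring

variable {R : Type*} [NonUnitalSemiring R] {δ : R → R} {x y z : R}

theorem mul_right (hxy : LeibnizAt δ x y) (hxyz : LeibnizAt δ (x * y) z)
    (hyz : LeibnizAt δ y z) : LeibnizAt δ x (y * z) := by
  unfold LeibnizAt at *
  rw [← mul_assoc, hxyz, hxy, hyz, add_mul, mul_add, mul_assoc, mul_assoc, mul_assoc, add_assoc]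

theorem mul_left (hyz : LeibnizAt δ y z) (hxyz : LeibnizAt δ x (y * z))
    (hxy : LeibnizAt δ x y) : LeibnizAt δ (x * y) z := by
  unfold LeibnizAt at *
  rw [mul_assoc, hxyz, hyz, hxy, add_mul, mul_add, mul_assoc, mul_assoc, mul_assoc, add_assoc]

theorem map_zero_of_mul_eq_zero (hyz : y * z = 0) (hzy : z * y = z) (h : LeibnizAt δ y z)
    (h' : LeibnizAt δ z y) (hz : LeibnizAt δ z z) : δ 0 = 0 := by
  unfold LeibnizAt at *
  have hzz : z * z = 0 := by rw [← hzy, mul_assoc, ← mul_assoc y, hyz, zero_mul, mul_zero]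
  rw [hyz] at h
  rw [hzy] at h'
  rw [hzz] at hz
  have hfix : δ 0 = z * δ 0 :=
    calc δ 0 = (δ z * y + z * δ y) * z + (z * y) * δ z := by rw [← h', hzy, ← hz]
      _ = δ z * (y * z) + z * (δ y * z + y * δ z) := by
        simp only [add_mul, mul_add, mul_assoc, add_assoc]
      _ = z * δ 0 := by rw [hyz, ← h, mul_zero, zero_add]
  rw [hfix, hfix, ← mul_assoc, hzz, zero_mul]

end NonUnitalSemiring

theorem sub_commutator {R : Type*} [NonUnitalRing R] {δ : R → R} {x y : R}
    (h : LeibnizAt δ x y) (a : R) : LeibnizAt (fun z ↦ δ z - (a * z - z * a)) x y := by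
  simp only [LeibnizAt] at *
  rw [h]
  noncomm_ring

theorem conj_iff {R S : Type*} [Mul R] [Add R] [Mul S] [Add S] {δ : R → R} (e : R ≃+* S)
    {x y : R} : LeibnizAt (e ∘ δ ∘ e.symm) (e x) (e y) ↔ LeibnizAt δ x y := by
  simp only [LeibnizAt, Function.comp_apply, ← map_mul, ← map_add, RingEquiv.symm_apply_apply,
    e.injective.eq_iff]

end LeibnizAt

section Endomorphisms

open Module
open LinearMap (ker range)

variable {K V : Type*} [DivisionRing K] [AddCommGroup V] [Module K V]

theorem finrank_range_mul_of_disjoint_ker {x g : End K V} (h : Disjoint (range g) (ker x)) :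
    finrank K (range (x * g)) = finrank K (range g) := by
  rw [End.mul_eq_comp, LinearMap.range_comp, ← LinearMap.range_domRestrict]
  exact LinearMap.finrank_range_of_inj (LinearMap.injective_domRestrict_iff.2 h)

variable [FiniteDimensional K V] {s : ℕ}

theorem exists_submodule_between_finrank_eq_s14 {A B : Submodule K V} (hAB : A ≤ B)
    (hA : finrank K A ≤ s) (hB : s ≤ finrank K B) :
    ∃ W : Submodule K V, A ≤ W ∧ W ≤ B ∧ finrank K W = s := by
  induction s, hA using Nat.le_induction with
  | base => exact ⟨A, le_rfl, hAB, rfl⟩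
  | succ k _ ih =>
    obtain ⟨W, hAW, hWB, hW⟩ := ih (by omega)
    obtain ⟨v, hvB, hvW⟩ : ∃ v ∈ B, v ∉ W := by
      by_contra! hBW
      have := Submodule.finrank_mono hBW
      omega
    refine ⟨W ⊔ K ∙ v, hAW.trans le_sup_left,
      sup_le hWB ((Submodule.span_singleton_le_iff_mem v B).2 hvB), ?_⟩
    rw [Submodule.finrank_sup_span_singleton hvW, hW]

theorem exists_submodule_ge_disjoint_finrank_eq {A N : Submodule K V} (hAN : Disjoint A N)
    (hA : finrank K A ≤ s) (hN : s + finrank K N ≤ finrank K V) :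
    ∃ W : Submodule K V, A ≤ W ∧ Disjoint W N ∧ finrank K W = s := by
  obtain ⟨C, hAC, hCN⟩ := hAN.exists_isCompl
  have hfinrank := Submodule.finrank_add_eq_of_isCompl hCN
  obtain ⟨W, hAW, hWC, hW⟩ := exists_submodule_between_finrank_eq_s14 hAC hA (by omega)
  exact ⟨W, hAW, hCN.disjoint.mono_left hWC, hW⟩

theorem disjoint_of_finrank_le_one {A N : Submodule K V} (hA : finrank K A ≤ 1) (h : ¬A ≤ N) :
    Disjoint A N := by
  have hlt := Submodule.finrank_lt_finrank_of_lt (inf_lt_left.2 h)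
  exact disjoint_iff.2 (Submodule.finrank_eq_zero.1 (by omega))

theorem exists_mul_eq_of_range_le (hs : 2 * s ≤ finrank K V) (f : End K V) {W : Submodule K V}
    (hW : finrank K W = s) (hf : range f ≤ W) :
    ∃ g h : End K V, g * h = f ∧ range g = W ∧ finrank K (range h) = s := by
  obtain ⟨C, hWC⟩ := W.exists_isCompl
  have hfinrank := Submodule.finrank_add_eq_of_isCompl hWC
  have hrank := f.finrank_range_add_finrank_ker
  have hrank_le := Submodule.finrank_mono hf
  obtain ⟨S, -, hSf, hS⟩ := exists_submodule_between_finrank_eq_s14 (bot_le (a := ker f))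
    (s := finrank K V - s) (by simp) (by omega)
  have hquot := S.finrank_quotient_add_finrank
  obtain ⟨i, hi⟩ := finrank_le_iff_exists_linearMap.1
    (show finrank K (V ⧸ S) ≤ finrank K C by omega)
  have hfW (v : V) : f v ∈ W := hf (f.mem_range_self v)
  let e := Submodule.prodEquivOfIsCompl W C hWC
  let h : End K V := e ∘ₗ (f.codRestrict W hfW).prod (i ∘ₗ S.mkQ)
  have hker : ker h = S := by
    rw [LinearEquiv.ker_comp, LinearMap.ker_prod, LinearMap.ker_codRestrict,
      LinearMap.ker_comp_of_ker_eq_bot _ (LinearMap.ker_eq_bot.2 hi), Submodule.ker_mkQ,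
      inf_eq_right.2 hSf]
  have hrank_h := h.finrank_range_add_finrank_ker
  rw [hker] at hrank_h
  refine ⟨W.projection C hWC, h, ?_, Submodule.range_projection hWC, by omega⟩
  ext v
  simp [h, e, hfW]

theorem exists_mul_eq_zero_and_mul_eq_self (hs : 2 * s ≤ finrank K V) :
    ∃ p z : End K V, finrank K (range p) = s ∧ finrank K (range z) = s ∧
      p * z = 0 ∧ z * p = z := by
  obtain ⟨W, -, -, hW⟩ := exists_submodule_between_finrank_eq_s14 (bot_le (a := (⊤ : Submodule K V)))
    (s := s) (by simp) (by rw [finrank_top]; omega)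
  obtain ⟨C, hWC⟩ := W.exists_isCompl
  have hfinrank := Submodule.finrank_add_eq_of_isCompl hWC
  obtain ⟨i, hi⟩ := finrank_le_iff_exists_linearMap.1
    (show finrank K W ≤ finrank K C by omega)
  refine ⟨W.projection C hWC, C.subtype ∘ₗ i ∘ₗ W.projectionOnto C hWC, ?_, ?_, ?_, ?_⟩
  · rw [Submodule.range_projection, hW]
  · rw [← LinearMap.comp_assoc, LinearMap.range_comp_of_range_eq_top _
      (Submodule.range_projectionOnto hWC), LinearMap.finrank_range_of_inj, hW]
    exact C.injective_subtype.comp hi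
  · ext v
    simp
  · ext v
    simp only [End.mul_apply, LinearMap.comp_apply, Submodule.projectionOnto_projection]

variable {δ : End K V → End K V} {x y : End K V}

theorem map_zero_of_leibnizAt (hs : 2 * s ≤ finrank K V)
    (hδ : ∀ x y, finrank K (range x) = s → finrank K (range y) = s → LeibnizAt δ x y) :
    δ 0 = 0 := by
  obtain ⟨p, z, hp, hz, hpz, hzp⟩ := exists_mul_eq_zero_and_mul_eq_self hs
  exact LeibnizAt.map_zero_of_mul_eq_zero hpz hzp (hδ p z hp hz) (hδ z p hz hp) (hδ z z hz hz)

theorem leibnizAt_of_range_le_ker_or_disjoint (hs : 2 * s ≤ finrank K V)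
    (hδ : ∀ x y, finrank K (range x) = s → finrank K (range y) = s → LeibnizAt δ x y)
    (hx : finrank K (range x) = s) (hy : finrank K (range y) ≤ s)
    (hyx : range y ≤ ker x ∨ Disjoint (range y) (ker x)) : LeibnizAt δ x y := by
  have hrank := x.finrank_range_add_finrank_ker
  obtain ⟨W, hyW, hW, hWx⟩ : ∃ W : Submodule K V, range y ≤ W ∧ finrank K W = s ∧
      (W ≤ ker x ∨ Disjoint W (ker x)) := by
    rcases hyx with hle | hdisj
    · obtain ⟨W, hyW, hWx, hW⟩ := exists_submodule_between_finrank_eq_s14 hle hy (by omega)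
      exact ⟨W, hyW, hW, .inl hWx⟩
    · obtain ⟨W, hyW, hWx, hW⟩ := exists_submodule_ge_disjoint_finrank_eq hdisj hy (by omega)
      exact ⟨W, hyW, hW, .inr hWx⟩
  obtain ⟨g, h, rfl, rfl, hh⟩ := exists_mul_eq_of_range_le hs y hW hyW
  refine (hδ x g hx hW).mul_right ?_ (hδ g h hW hh)
  rcases hWx with hle | hdisj
  · have hxg : x * g = 0 := LinearMap.range_le_ker_iff.1 hle
    simp [LeibnizAt, hxg, map_zero_of_leibnizAt hs hδ]
  · exact hδ _ _ ((finrank_range_mul_of_disjoint_ker hdisj).trans hW) hh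

theorem leibnizAt_of_finrank_range_le (hs₁ : 1 ≤ s) (hs₂ : 2 * s ≤ finrank K V)
    (hδ : ∀ x y, finrank K (range x) = s → finrank K (range y) = s → LeibnizAt δ x y)
    (hx : finrank K (range x) ≤ s) (hy : finrank K (range y) ≤ 1) : LeibnizAt δ x y := by
  have leibniz_of_eq {x y : End K V} (hx : finrank K (range x) = s)
      (hy : finrank K (range y) ≤ 1) : LeibnizAt δ x y :=
    leibnizAt_of_range_le_ker_or_disjoint hs₂ hδ hx (hy.trans hs₁)
      (or_iff_not_imp_left.2 (disjoint_of_finrank_le_one hy))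
  obtain ⟨W, hxW, -, hW⟩ := exists_submodule_between_finrank_eq_s14 (le_top (a := range x)) hx
    (by rw [finrank_top]; omega)
  obtain ⟨g, h, rfl, rfl, hh⟩ := exists_mul_eq_of_range_le hs₂ x hW hxW
  have hhy : finrank K (range (h * y)) ≤ 1 := by
    rw [End.mul_eq_comp, LinearMap.range_comp]
    exact (Submodule.finrank_map_le h _).trans hy
  exact (leibniz_of_eq hh hy).mul_left (leibniz_of_eq hW hhy) (hδ g h hW hh)

end Endomorphisms

section Matrices

variable {ι : Type*} [Fintype ι]

theorem leibnizAt_of_rank_le {s : ℕ} {K : Type*} [Field K] {δ : Matrix ι ι K → Matrix ι ι K}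
    (hs₁ : 1 ≤ s) (hs₂ : 2 * s ≤ Fintype.card ι)
    (hδ : ∀ x y : Matrix ι ι K, x.rank = s → y.rank = s → LeibnizAt δ x y)
    {x y : Matrix ι ι K} (hx : x.rank ≤ s) (hy : y.rank ≤ 1) : LeibnizAt δ x y := by
  classical
  let e : Matrix ι ι K ≃+* Module.End K (ι → K) := toLinAlgEquiv'.toRingEquiv
  have hrank (f : Module.End K (ι → K)) :
      (e.symm f).rank = Module.finrank K (LinearMap.range f) :=
    congrArg (fun g ↦ Module.finrank K (LinearMap.range g)) (e.apply_symm_apply f)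
  rw [← LeibnizAt.conj_iff e]
  refine leibnizAt_of_finrank_range_le hs₁ (by simpa using hs₂) (fun f g hf hg ↦ ?_) hx hy
  rw [← e.apply_symm_apply f, ← e.apply_symm_apply g, LeibnizAt.conj_iff]
  exact hδ _ _ ((hrank f).trans hf) ((hrank g).trans hg)

theorem exists_commutator_eq_of_leibnizAt_single [DecidableEq ι] {R : Type*} [Ring R]
    {δ : Matrix ι ι R → Matrix ι ι R}
    (hδ : ∀ i j k l, LeibnizAt δ (single i j 1) (single k l 1)) :
    ∃ A : Matrix ι ι R, ∀ i j, δ (single i j 1) = A * single i j 1 - single i j 1 * A := by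
  obtain _ | ⟨⟨o⟩⟩ := isEmpty_or_nonempty ι
  · exact ⟨0, isEmptyElim⟩
  refine ⟨∑ k, δ (single k o 1) * single o k 1, fun i j ↦ ?_⟩
  have map_zero {k : ι} (hk : k ≠ j) : δ 0 = 0 :=
    LeibnizAt.map_zero_of_mul_eq_zero (single_mul_single_of_ne 1 j j k hk.symm 1) (by simp)
      (hδ j j k j) (hδ k j j j) (hδ k j k j)
  have hleft : (∑ k, δ (single k o 1) * single o k 1) * single i j 1 =
      δ (single i o 1) * single o j 1 := by
    rw [Finset.sum_mul, Finset.sum_eq_single i]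
    · rw [mul_assoc, single_mul_single_same, one_mul]
    · intro k _ hk
      rw [mul_assoc, single_mul_single_of_ne _ _ _ _ hk, mul_zero]
    · simp
  have hterm (k : ι) : single i j 1 * (δ (single k o 1) * single o k 1) =
      δ (single i j 1 * single k o 1) * single o k 1 - δ (single i j 1) * single k k 1 := by
    rw [hδ i j k o, add_mul, mul_assoc (δ _), single_mul_single_same, one_mul, mul_assoc,
      add_sub_cancel_left]
  have hright : single i j 1 * ∑ k, δ (single k o 1) * single o k 1 =
      δ (single i o 1) * single o j 1 - δ (single i j 1) := by
    rw [Finset.mul_sum, Finset.sum_congr rfl fun k _ ↦ hterm k, Finset.sum_sub_distrib,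
      ← Finset.mul_sum, sum_single_one, mul_one, Finset.sum_eq_single j]
    · rw [single_mul_single_same, one_mul]
    · intro k _ hk
      rw [single_mul_single_of_ne _ _ _ _ hk.symm, map_zero hk, zero_mul]
    · simp
  rw [hleft, hright, sub_sub_cancel]

theorem apply_eq_of_leibnizAt_single [DecidableEq ι] {R : Type*} [Semiring R]
    {δ : Matrix ι ι R → Matrix ι ι R} (hδ1 : ∀ i j, δ (single i j 1) = 0) {x : Matrix ι ι R}
    {i j k : ι} (hright : LeibnizAt δ x (single j k 1))
    (hleft : LeibnizAt δ (single k i 1) (x * single j k 1)) :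
    δ x i j = δ (single k k (x i j)) k k := by
  have hx : single k k (x i j) = single k i 1 * (x * single j k 1) := by
    rw [← mul_assoc, single_mul_mul_single, one_mul, mul_one]
  rw [hx, hleft, hright, hδ1, hδ1, zero_mul, mul_zero, zero_add, add_zero, ← mul_assoc,
    single_mul_mul_single, single_apply_same, one_mul, mul_one]

theorem exists_derivation_of_map_dotProduct [Nontrivial ι] {R : Type*} [CommRing R] {μ : R → R}
    (hμ : ∀ u v : ι → R, μ (u ⬝ᵥ v) = (μ ∘ u) ⬝ᵥ v + u ⬝ᵥ (μ ∘ v)) :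
    ∃ D : Derivation ℤ R R, ⇑D = μ := by
  classical
  obtain ⟨i, j, hij⟩ := exists_pair_ne ι
  have map_mul (a b : R) : μ (a * b) = a * μ b + b * μ a := by
    simpa [mul_comm, add_comm] using hμ (Pi.single i a) (Pi.single i b)
  have map_one : μ 1 = 0 := by simpa using map_mul 1 1
  have map_add (a b : R) : μ (a + b) = μ a + μ b := by
    let e (k : ι) (c : R) : ι → R := Pi.single k c
    simpa [e, hij, hij.symm, map_one] using hμ (e i 1 + e j 1) (e i a + e j b)
  exact ⟨.mk' (AddMonoidHom.mk' μ map_add).toIntLinearMap map_mul, rfl⟩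

theorem rank_single_one_le [DecidableEq ι] {R : Type*} [CommSemiring R] [StrongRankCondition R]
    (i j : ι) : (single i j (1 : R)).rank ≤ 1 := by
  rw [single_eq_single_vecMulVec_single]
  exact rank_vecMulVec_le _ _

theorem exists_derivation_eq_map_of_leibnizAt [DecidableEq ι] [Nontrivial ι] {R : Type*}
    [CommRing R] [Nontrivial R] {δ : Matrix ι ι R → Matrix ι ι R} {s : ℕ} (hs : 1 ≤ s)
    (hδ : ∀ x y : Matrix ι ι R, x.rank ≤ s → y.rank ≤ 1 → LeibnizAt δ x y)
    (hδ1 : ∀ i j, δ (single i j 1) = 0) :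
    ∃ μ : Derivation ℤ R R, ∀ x : Matrix ι ι R, x.rank ≤ s → δ x = x.map μ := by
  obtain ⟨o⟩ : Nonempty ι := inferInstance
  let μ : R → R := fun c ↦ δ (single o o c) o o
  have eq_map {x : Matrix ι ι R} (hx : x.rank ≤ s) : δ x = x.map μ := by
    ext i j
    exact apply_eq_of_leibnizAt_single hδ1 (hδ _ _ hx (rank_single_one_le j o))
      (hδ _ _ ((rank_single_one_le o i).trans hs)
        ((rank_mul_le_right _ _).trans (rank_single_one_le j o)))
  obtain ⟨D, hD⟩ := exists_derivation_of_map_dotProduct (ι := ι) (μ := μ) fun u v ↦ by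
    let row := vecMulVec (Pi.single o 1) u
    let col := vecMulVec v (Pi.single o 1)
    have hrow : row.rank ≤ 1 := rank_vecMulVec_le _ _
    have hcol : col.rank ≤ 1 := rank_vecMulVec_le _ _
    have h := hδ row col (hrow.trans hs) hcol
    rw [LeibnizAt, eq_map (hrow.trans hs), eq_map (hcol.trans hs),
      eq_map (((rank_mul_le_right _ _).trans hcol).trans hs)] at h
    simpa [row, col, mul_apply, vecMulVec_apply, dotProduct] using congr_fun₂ h o o
  exact ⟨D, fun x hx ↦ hD ▸ eq_map hx⟩

end Matrices

theorem stmt_14_general {ι K : Type*} [Fintype ι] [Field K] {s : ℕ}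
    (hs₁ : 1 ≤ s) (hs₂ : 2 * s ≤ Fintype.card ι) (δ : Matrix ι ι K → Matrix ι ι K)
    (hδ : ∀ x y : Matrix ι ι K, x.rank = s → y.rank = s → δ (x * y) = δ x * y + x * δ y) :
    ∃ (A : Matrix ι ι K) (μ : Derivation ℤ K K),
      ∀ x : Matrix ι ι K, x.rank ≤ s → δ x = A * x - x * A + x.map μ := by
  classical
  have : Nontrivial ι := Fintype.one_lt_card_iff_nontrivial.1 (by omega)
  have leibniz {x y : Matrix ι ι K} (hx : x.rank ≤ s) (hy : y.rank ≤ 1) : LeibnizAt δ x y :=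
    leibnizAt_of_rank_le hs₁ hs₂ hδ hx hy
  obtain ⟨A, hA⟩ := exists_commutator_eq_of_leibnizAt_single fun i j k l ↦
    leibniz ((rank_single_one_le i j).trans hs₁) (rank_single_one_le k l)
  obtain ⟨μ, hμ⟩ := exists_derivation_eq_map_of_leibnizAt hs₁
    (fun _ _ hx hy ↦ (leibniz hx hy).sub_commutator A) fun i j ↦ sub_eq_zero.2 (hA i j)
  exact ⟨A, μ, fun x hx ↦ sub_eq_iff_eq_add'.1 (hμ x hx)⟩

theorem stmt_14 {n s : ℕ} (K : Type*) [Field K]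
    (hn : 2 ≤ n) (hs1 : 1 ≤ s) (hs2 : 2 * s ≤ n)
    (δ : Matrix (Fin n) (Fin n) K → Matrix (Fin n) (Fin n) K)
    (hδ : ∀ x y : Matrix (Fin n) (Fin n) K,
      x.rank = s → y.rank = s → δ (x * y) = δ x * y + x * δ y) :
    ∃ (A : Matrix (Fin n) (Fin n) K) (μ : K → K),
      (∀ a b : K, μ (a + b) = μ a + μ b) ∧
      (∀ a b : K, μ (a * b) = a * μ b + μ a * b) ∧
      (∀ x : Matrix (Fin n) (Fin n) K, x.rank ≤ s →
        δ x = A * x - x * A + x.map μ) := by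
  obtain ⟨A, μ, h⟩ := stmt_14_general hs1 (by simpa using hs2) δ hδ
  exact ⟨A, μ, map_add μ, fun a b ↦ by simp [mul_comm], h⟩
end
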